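/- Let n, m ≥ 1 with n+m ≥ 3, and in C₊(n+m) set τ̂ := (2^{−(n+m−1)/2} · (e_{n+m}−e_{n+m−1})(e_{n+m−1}−e_{n+m−2})⋯(e_2−e_1))^n, the n-th power of the indicated product of n+m−1 difference factors taken with descending indices from left to right. Then τ̂ · e_n e_{n+m} = e_{n+m} e_m · τ̂. -/

import Mathlib

/-!
Write `N = n + m` and `d_k = e_{k+2} - e_{k+1}`. Moving a vector to the left across `d_k` applies
minus the transposition of `e_{k+1}` and `e_{k+2}` to it (`diff_mul_left`, `diff_mul_right`,
`diff_mul_other`). Hence moving a generator across the whole product `P = d_{N-2} ⋯ d_0` applies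
`ε = (-1)^(N-1)` times the cyclic shift `e_j ↦ e_{j-1}`, `e_1 ↦ e_N`
(`prod_mul_first`, `prod_mul_low`). Scalars do not matter for this, so `τ̂ = (c P)^n` sends
`e_n` to `ε^n e_N` and `e_N` to `ε^n e_{N-n} = ε^n e_m` (`pow_mul_gen`). The two signs multiply to
`ε^(2n) = 1`.
-/

/-- The positive Clifford algebra `C₊(N)`: the Clifford algebra over `ℝ` of the standard
positive-definite quadratic form on `ℝ^N`. -/
noncomputable abbrev CliffordPlus (N : ℕ) : Type :=
  CliffordAlgebra (QuadraticMap.weightedSumSquares ℝ (fun _ : Fin N => (1 : ℝ)))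

/-- The generator `e_j` (for `1 ≤ j ≤ N`) of `C₊(N)`, given by the `j`-th standard basis
vector of `ℝ^N`. -/
noncomputable def cliffGen (N : ℕ) (j : ℕ) : CliffordPlus N :=
  CliffordAlgebra.ι _ (fun i : Fin N => if (i : ℕ) + 1 = j then (1 : ℝ) else 0)

section Abstract

variable {A : Type*} [Ring A]

/-- The difference `e_{k+2} - e_{k+1}`. -/
def genDiff (e : ℕ → A) (k : ℕ) : A := e (k + 2) - e (k + 1)

/-- The product `(e_{K+1} - e_K) ⋯ (e_2 - e_1)` of `K` differences, indices descending. -/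
def diffProd (e : ℕ → A) (K : ℕ) : A := ((List.range K).reverse.map (genDiff e)).prod

theorem diffProd_succ (e : ℕ → A) (K : ℕ) :
    diffProd e (K + 1) = genDiff e K * diffProd e K := by
  simp [diffProd, List.range_succ]

variable {N : ℕ} {e : ℕ → A}

theorem diff_mul_left (hsq : ∀ j, 1 ≤ j → j ≤ N → e j * e j = 1)
    {k : ℕ} (hk : k + 2 ≤ N) :
    genDiff e k * e (k + 1) = -(e (k + 2) * genDiff e k) := by
  simp only [genDiff, sub_mul, mul_sub, hsq (k + 1) (by omega) (by omega),
    hsq (k + 2) (by omega) hk]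
  abel

theorem diff_mul_right (hsq : ∀ j, 1 ≤ j → j ≤ N → e j * e j = 1)
    {k : ℕ} (hk : k + 2 ≤ N) :
    genDiff e k * e (k + 2) = -(e (k + 1) * genDiff e k) := by
  simp only [genDiff, sub_mul, mul_sub, hsq (k + 1) (by omega) (by omega),
    hsq (k + 2) (by omega) hk]
  abel

theorem diff_mul_other (hanti : ∀ i j, i ≠ j → e i * e j = -(e j * e i))
    {k j : ℕ} (h1 : j ≠ k + 1) (h2 : j ≠ k + 2) :
    genDiff e k * e j = -(e j * genDiff e k) := by
  simp only [genDiff, sub_mul, mul_sub, hanti (k + 1) j h1.symm, hanti (k + 2) j h2.symm]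
  abel

variable [Algebra ℝ A]

/-- Chaining one more difference: signs multiply and index changes compose. -/
theorem prod_step {K a b c : ℕ}
    (h1 : diffProd e K * e a = (-1 : ℝ) ^ K • (e b * diffProd e K))
    (h2 : genDiff e K * e b = -(e c * genDiff e K)) :
    diffProd e (K + 1) * e a = (-1 : ℝ) ^ (K + 1) • (e c * diffProd e (K + 1)) := by
  rw [diffProd_succ, mul_assoc, h1, mul_smul_comm, ← mul_assoc, h2, pow_succ, mul_smul,
    neg_mul, mul_assoc]
  simp

/-- Generators beyond the range of the product are unchanged up to sign. -/
theorem prod_mul_high (hanti : ∀ i j, i ≠ j → e i * e j = -(e j * e i))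
    {K j : ℕ} (hj : K + 1 < j) :
    diffProd e K * e j = (-1 : ℝ) ^ K • (e j * diffProd e K) := by
  induction K with
  | zero => simp [diffProd]
  | succ K ih =>
    exact prod_step (ih (by omega)) (diff_mul_other hanti (by omega) (by omega))

theorem prod_mul_first (hsq : ∀ j, 1 ≤ j → j ≤ N → e j * e j = 1)
    {K : ℕ} (hK : K + 1 ≤ N) :
    diffProd e K * e 1 = (-1 : ℝ) ^ K • (e (K + 1) * diffProd e K) := by
  induction K with
  | zero => simp [diffProd]
  | succ K ih => exact prod_step (ih (by omega)) (diff_mul_left hsq hK)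

theorem prod_mul_low (hsq : ∀ j, 1 ≤ j → j ≤ N → e j * e j = 1)
    (hanti : ∀ i j, i ≠ j → e i * e j = -(e j * e i))
    {K j : ℕ} (hK : K + 1 ≤ N) (hj : 1 ≤ j) (hjK : j ≤ K) :
    diffProd e K * e (j + 1) = (-1 : ℝ) ^ K • (e j * diffProd e K) := by
  induction K with
  | zero => omega
  | succ K ih =>
    rcases Nat.lt_or_ge K j with h | h
    · obtain rfl : j = K + 1 := by omega
      exact prod_step (prod_mul_high hanti (by omega)) (diff_mul_right hsq hK)
    · exact prod_step (ih (by omega) h) (diff_mul_other hanti (by omega) (by omega))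

/-- Iterating a relation `T e_{j+1} = ε e_j T`. -/
theorem pow_mul_gen {T : A} {ε : ℝ}
    (h : ∀ j, 1 ≤ j → j + 1 ≤ N → T * e (j + 1) = ε • (e j * T))
    (k j : ℕ) (hj : 1 ≤ j) (hjk : j + k ≤ N) :
    T ^ k * e (j + k) = ε ^ k • (e j * T ^ k) := by
  induction k with
  | zero => simp
  | succ k ih =>
    rw [pow_succ, mul_assoc, ← add_assoc, h (j + k) (by omega) (by omega), mul_smul_comm,
      ← mul_assoc, ih (by omega), smul_mul_assoc, smul_smul, mul_assoc, pow_succ' ε]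

/-- The conjugation identity in any real algebra with elements satisfying the Clifford
relations. -/
theorem shuffle_abstract (hsq : ∀ j, 1 ≤ j → j ≤ N → e j * e j = 1)
    (hanti : ∀ i j, i ≠ j → e i * e j = -(e j * e i))
    (n m : ℕ) (hn : 1 ≤ n) (hm : 1 ≤ m) (hN : n + m = N) (c : ℝ) :
    (c • diffProd e (N - 1)) ^ n * (e n * e N) =
      (e N * e m) * (c • diffProd e (N - 1)) ^ n := by
  set ε : ℝ := (-1) ^ (N - 1) with hε
  set T := c • diffProd e (N - 1) with hT
  have hfirst : T * e 1 = ε • (e N * T) := by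
    have := prod_mul_first hsq (K := N - 1) (by omega)
    rw [show N - 1 + 1 = N by omega] at this
    rw [hT, smul_mul_assoc, this, mul_smul_comm, smul_comm]
  have hlow : ∀ j, 1 ≤ j → j + 1 ≤ N → T * e (j + 1) = ε • (e j * T) := by
    intro j h1 h2
    rw [hT, smul_mul_assoc, prod_mul_low hsq hanti (by omega) h1 (by omega), mul_smul_comm,
      smul_comm]
  have hpow_n : T ^ n * e n = ε ^ n • (e N * T ^ n) := by
    obtain ⟨k, rfl⟩ : ∃ k, n = k + 1 := ⟨n - 1, by omega⟩
    have := pow_mul_gen hlow k 1 le_rfl (by omega)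
    rw [add_comm k 1, pow_add, mul_assoc, this, mul_smul_comm, ← mul_assoc, pow_one, hfirst,
      smul_mul_assoc, smul_smul, mul_assoc, pow_add, pow_one, mul_comm ε]
  have hpow_N : T ^ n * e N = ε ^ n • (e m * T ^ n) := by
    have := pow_mul_gen hlow n m hm (by omega)
    rwa [show m + n = N by omega] at this
  have hsign : ε ^ n * ε ^ n = 1 := by
    rw [← mul_pow, hε, ← mul_pow]
    simp
  rw [← mul_assoc, hpow_n, smul_mul_assoc, mul_assoc, hpow_N, mul_smul_comm, smul_smul, hsign,
    one_smul, mul_assoc]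

end Abstract

theorem cliffGen_sq {N j : ℕ} (h1 : 1 ≤ j) (h2 : j ≤ N) :
    cliffGen N j * cliffGen N j = 1 := by
  rw [cliffGen, CliffordAlgebra.ι_sq_scalar, QuadraticMap.weightedSumSquares_apply,
    Finset.sum_eq_single (⟨j - 1, by omega⟩ : Fin N)]
  · simp [Nat.sub_add_cancel h1]
  · intro i _ hi
    have : (i : ℕ) + 1 ≠ j := fun h => hi (Fin.ext (by simp; omega))
    simp [this]
  · simp

/-- Distinct generators anticommute; out of range indices give the zero vector, so no bounds are
needed. -/
theorem cliffGen_anti {N : ℕ} (i j : ℕ) (hij : i ≠ j) :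
    cliffGen N i * cliffGen N j = -(cliffGen N j * cliffGen N i) := by
  apply CliffordAlgebra.ι_mul_ι_comm_of_isOrtho
  rw [QuadraticMap.isOrtho_def]
  simp only [QuadraticMap.weightedSumSquares_apply, ← Finset.sum_add_distrib]
  refine Finset.sum_congr rfl fun k _ => ?_
  by_cases h1 : (k : ℕ) + 1 = i
  · have h2 : (k : ℕ) + 1 ≠ j := by omega
    simp [h1, hij]
  · simp [h1]

/-- **Statement 19.**  Let `n, m ≥ 1` with `n + m ≥ 3`, and in `C₊(n+m)` set
`τ̂ := (2^{-(n+m-1)/2} ⬝ (e_{n+m}-e_{n+m-1})(e_{n+m-1}-e_{n+m-2})⋯(e_2-e_1))^n`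
(the scalar `2^{-(n+m-1)/2}` being `(√2)^{-(n+m-1)}`).  Then
`τ̂ ⬝ e_n e_{n+m} = e_{n+m} e_m ⬝ τ̂`. -/
theorem cliffordPlus_shuffle_conjugation (n m : ℕ) (hn : 1 ≤ n) (hm : 1 ≤ m)
    (hnm : 3 ≤ n + m) :
    ((((Real.sqrt 2 ^ (n + m - 1))⁻¹ : ℝ)) •
        ((List.range (n + m - 1)).reverse.map
            (fun k => cliffGen (n + m) (k + 2) - cliffGen (n + m) (k + 1))).prod) ^ n *
      (cliffGen (n + m) n * cliffGen (n + m) (n + m)) =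
    (cliffGen (n + m) (n + m) * cliffGen (n + m) m) *
      ((((Real.sqrt 2 ^ (n + m - 1))⁻¹ : ℝ)) •
        ((List.range (n + m - 1)).reverse.map
            (fun k => cliffGen (n + m) (k + 2) - cliffGen (n + m) (k + 1))).prod) ^ n := by
  exact shuffle_abstract (N := n + m) (e := cliffGen (n + m))
    (fun _ h1 h2 => cliffGen_sq h1 h2) cliffGen_anti n m hn hm rfl _
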